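/- Let S be a set of n ≥ 3 points in the plane in convex position, and let P₁ and P₂ be two spanning paths on S each consisting entirely of edges of the convex hull of S (i.e., each is obtained from the hull cycle by deleting one hull edge). Then P₁ can be transformed into P₂ by a sequence of at most n − 2 edge slides. -/

import Mathlib

open scoped Classical

noncomputable section

/-- Points in the plane. -/
abbrev Pt : Type := ℝ × ℝ

/-- The closed straight-line segment spanned by an (unordered) edge. -/
def segOf (e : Sym2 Pt) : Set Pt :=
  Sym2.lift ⟨fun p q => segment ℝ p q, fun p q => segment_symm ℝ p q⟩ e

/-- The set of endpoints of an edge. -/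
def epts (e : Sym2 Pt) : Set Pt := {p | p ∈ e}

/-- Two edges intersect in at most common endpoints (they do not cross). -/
def NoCrossPair (e f : Sym2 Pt) : Prop := segOf e ∩ segOf f ⊆ epts e ∩ epts f

/-- A set of edges is noncrossing: any two distinct edges meet in at most a common endpoint. -/
def NoCross (E : Finset (Sym2 Pt)) : Prop := ∀ e ∈ E, ∀ f ∈ E, e ≠ f → NoCrossPair e f

/-- `E` is the edge set of a noncrossing straight-line spanning tree on the point set `S`:
all edges are nondegenerate with endpoints in `S`, pairwise noncrossing, there are
`|S| - 1` of them, and they connect all of `S`. -/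
def IsPST (S : Finset Pt) (E : Finset (Sym2 Pt)) : Prop :=
  (∀ e ∈ E, ¬ e.IsDiag ∧ ∀ p ∈ e, p ∈ S) ∧
  NoCross E ∧ E.card + 1 = S.card ∧
  ∀ p ∈ S, ∀ q ∈ S, Relation.ReflTransGen (fun a b => s(a, b) ∈ E) p q

/-- `S` is in general position: no three of its points are collinear. -/
def GenPos (S : Finset Pt) : Prop :=
  ∀ p ∈ S, ∀ q ∈ S, ∀ r ∈ S, p ≠ q → p ≠ r → q ≠ r → ¬ Collinear ℝ ({p, q, r} : Set Pt)

/-- `S` is in convex position: every point of `S` is a vertex of the convex hull of `S`. -/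
def ConvexPos (S : Finset Pt) : Prop :=
  ∀ p ∈ S, p ∉ convexHull ℝ ((S : Set Pt) \ {p})

/-- The open interior of the triangle with vertices `p`, `q`, `r`. -/
def triInt (p q r : Pt) : Set Pt := interior (convexHull ℝ ({p, q, r} : Set Pt))

/-- `y` can be reached from `x` by a sequence of at most `m` `step`-operations. -/
def ReachesIn {α : Type*} (step : α → α → Prop) (m : ℕ) (x y : α) : Prop :=
  ∃ k ≤ m, ∃ f : ℕ → α, f 0 = x ∧ f k = y ∧ ∀ i < k, step (f i) (f (i + 1))

/-- A simultaneous rotation from `E₁` to `E₂`: a bijection `π` between the removed and the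
inserted edges such that each `e` shares an endpoint with `π e` and `π e` crosses no edge
of `E₁`. -/
def SimRotation (S : Finset Pt) (E₁ E₂ : Finset (Sym2 Pt)) : Prop :=
  IsPST S E₁ ∧ IsPST S E₂ ∧ ∃ π : Sym2 Pt → Sym2 Pt,
    Set.BijOn π ↑(E₁ \ E₂) ↑(E₂ \ E₁) ∧
    ∀ e ∈ E₁ \ E₂, (∃ p, p ∈ e ∧ p ∈ π e) ∧ ∀ f ∈ E₁, NoCrossPair (π e) f

/-- An empty-triangle rotation replaces an edge `pq` by an adjacent edge `pr` such that
no edge of either tree meets the interior of the triangle `pqr`. -/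
def EmptyTriRot (S : Finset Pt) (E₁ E₂ : Finset (Sym2 Pt)) : Prop :=
  IsPST S E₁ ∧ IsPST S E₂ ∧ ∃ p q r : Pt,
    E₁ \ E₂ = {s(p, q)} ∧ E₂ \ E₁ = {s(p, r)} ∧
    ∀ g ∈ E₁ ∪ E₂, Disjoint (segOf g) (triInt p q r)

/-- A simultaneous empty-triangle rotation. -/
def SimEmptyTriRot (S : Finset Pt) (E₁ E₂ : Finset (Sym2 Pt)) : Prop :=
  IsPST S E₁ ∧ IsPST S E₂ ∧ ∃ π : Sym2 Pt → Sym2 Pt,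
    Set.BijOn π ↑(E₁ \ E₂) ↑(E₂ \ E₁) ∧
    ∀ e ∈ E₁ \ E₂, ∃ p q r : Pt, e = s(p, q) ∧ π e = s(p, r) ∧
      ∀ g ∈ E₁ ∪ E₂, Disjoint (segOf g) (triInt p q r)

/-- An edge slide replaces `pq` by `pr`, where `qr` is an edge of both trees and no edge of
either tree meets the interior of the triangle `pqr`. -/
def EdgeSlide (S : Finset Pt) (E₁ E₂ : Finset (Sym2 Pt)) : Prop :=
  IsPST S E₁ ∧ IsPST S E₂ ∧ ∃ p q r : Pt,
    E₁ \ E₂ = {s(p, q)} ∧ E₂ \ E₁ = {s(p, r)} ∧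
    s(q, r) ∈ E₁ ∧ s(q, r) ∈ E₂ ∧
    ∀ g ∈ E₁ ∪ E₂, Disjoint (segOf g) (triInt p q r)

/-- A simultaneous edge slide. -/
def SimEdgeSlide (S : Finset Pt) (E₁ E₂ : Finset (Sym2 Pt)) : Prop :=
  IsPST S E₁ ∧ IsPST S E₂ ∧ ∃ π : Sym2 Pt → Sym2 Pt,
    Set.BijOn π ↑(E₁ \ E₂) ↑(E₂ \ E₁) ∧
    ∀ e ∈ E₁ \ E₂, ∃ p q r : Pt, e = s(p, q) ∧ π e = s(p, r) ∧
      s(q, r) ∈ E₁ ∧ s(q, r) ∈ E₂ ∧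
      ∀ g ∈ E₁ ∪ E₂, Disjoint (segOf g) (triInt p q r)

/-- `e` is an edge of the convex hull of `S`: it joins two distinct points of `S` and its
segment lies on the boundary of the convex hull of `S`. -/
def IsHullEdge (S : Finset Pt) (e : Sym2 Pt) : Prop :=
  ∃ u v : Pt, e = s(u, v) ∧ u ∈ S ∧ v ∈ S ∧ u ≠ v ∧
    segment ℝ u v ⊆ frontier (convexHull ℝ (S : Set Pt))

/-- The spanning star centered at `v`. -/
def starAt (S : Finset Pt) (v : Pt) : Finset (Sym2 Pt) := (S.erase v).image (fun w => s(v, w))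

/-- An edge-labeled tree: an edge set together with a labeling function. -/
abbrev LTree := Finset (Sym2 Pt) × (Sym2 Pt → ℕ)

/-- `T` is an edge-labeled noncrossing straight-line spanning tree on `S`: its edge set is in
`𝒯(S)` and its labeling is a bijection from the edges onto `{1, …, |S| - 1}`
(normalized to `0` on non-edges). -/
def IsLabeledPST (S : Finset Pt) (T : LTree) : Prop :=
  IsPST S T.1 ∧ Set.BijOn T.2 ↑T.1 (Set.Icc 1 (S.card - 1)) ∧ ∀ e, e ∉ T.1 → T.2 e = 0

/-- A simultaneous exchange on edge-labeled trees: an arbitrary bijection between removed and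
inserted edges transferring labels, all common edges keeping their labels. -/
def LabSimExchange (S : Finset Pt) (T₁ T₂ : LTree) : Prop :=
  IsLabeledPST S T₁ ∧ IsLabeledPST S T₂ ∧ ∃ π : Sym2 Pt → Sym2 Pt,
    Set.BijOn π ↑(T₁.1 \ T₂.1) ↑(T₂.1 \ T₁.1) ∧
    (∀ e ∈ T₁.1 \ T₂.1, T₂.2 (π e) = T₁.2 e) ∧
    ∀ e ∈ T₁.1 ∩ T₂.1, T₂.2 e = T₁.2 e

/-- A rotation on edge-labeled trees: the removed and inserted edges share an endpoint and do
not cross, the label of the removed edge is transferred, and all other labels are kept. -/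
def LabRotation (S : Finset Pt) (T₁ T₂ : LTree) : Prop :=
  IsLabeledPST S T₁ ∧ IsLabeledPST S T₂ ∧ ∃ e₁ e₂ : Sym2 Pt,
    T₁.1 \ T₂.1 = {e₁} ∧ T₂.1 \ T₁.1 = {e₂} ∧
    (∃ p, p ∈ e₁ ∧ p ∈ e₂) ∧ NoCrossPair e₁ e₂ ∧
    T₂.2 e₂ = T₁.2 e₁ ∧ ∀ e ∈ T₁.1 ∩ T₂.1, T₂.2 e = T₁.2 e

/-- An edge slide on edge-labeled trees, transferring the label of the slid edge. -/
def LabEdgeSlide (S : Finset Pt) (T₁ T₂ : LTree) : Prop :=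
  IsLabeledPST S T₁ ∧ IsLabeledPST S T₂ ∧ ∃ p q r : Pt,
    T₁.1 \ T₂.1 = {s(p, q)} ∧ T₂.1 \ T₁.1 = {s(p, r)} ∧
    s(q, r) ∈ T₁.1 ∧ s(q, r) ∈ T₂.1 ∧
    (∀ g ∈ T₁.1 ∪ T₂.1, Disjoint (segOf g) (triInt p q r)) ∧
    T₂.2 (s(p, r)) = T₁.2 (s(p, q)) ∧ ∀ e ∈ T₁.1 ∩ T₂.1, T₂.2 e = T₁.2 e


/-!
Every vertex lies on at most two hull edges, so there are at most `n` of them, and two distinct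
spanning trees made of hull edges are `C ∪ {pq}` and `C ∪ {p₁q₁}` for a common forest `C` with two
components, one containing `p` and `p₁` and the other `q` and `q₁`. Slide the endpoint `q` along
the path of `C` to `q₁`, then `p` along the path of `C` to `p₁`. Each step is an edge slide because
in convex position a hull edge neither crosses another edge nor meets the interior of a triangle.
The two paths are disjoint, so they have at most `n - 2` edges in total.
-/

lemma exists_eq_insert_of_card_union_le {α : Type*} [DecidableEq α] {A B : Finset α}
    (hne : A ≠ B) (hcard : A.card = B.card) (hunion : (A ∪ B).card ≤ A.card + 1) :
    ∃ C a b, a ∉ C ∧ b ∉ C ∧ A = insert a C ∧ B = insert b C := by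
  have hAB : (A \ B).card = (B \ A).card := Finset.card_sdiff_comm hcard
  have hBA : (B \ A).card ≤ 1 := by
    have := Finset.card_union_add_card_inter A B
    have := Finset.card_sdiff_add_card_inter B A
    rw [Finset.inter_comm] at this
    omega
  have hpos : 0 < (A \ B).card :=
    Finset.card_pos.mpr <| Finset.sdiff_nonempty.mpr fun h ↦
      hne (Finset.eq_of_subset_of_card_le h hcard.ge)
  obtain ⟨a, ha⟩ := Finset.card_eq_one.mp (show (A \ B).card = 1 by omega)
  obtain ⟨b, hb⟩ := Finset.card_eq_one.mp (show (B \ A).card = 1 by omega)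
  have ha_mem : a ∈ A \ B := ha ▸ Finset.mem_singleton_self a
  have hb_mem : b ∈ B \ A := hb ▸ Finset.mem_singleton_self b
  refine ⟨A ∩ B, a, b, by grind, by grind, ?_, ?_⟩
  · rw [Finset.insert_eq, ← ha, Finset.sdiff_union_inter]
  · rw [Finset.insert_eq, ← hb, Finset.inter_comm, Finset.sdiff_union_inter]

section ReachesIn

variable {α : Type*} {step : α → α → Prop} {m n : ℕ} {x y z : α}

lemma ReachesIn.refl (step : α → α → Prop) (m : ℕ) (x : α) : ReachesIn step m x x :=
  ⟨0, m.zero_le, fun _ ↦ x, rfl, rfl, by simp⟩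

lemma ReachesIn.single (h : step x y) : ReachesIn step 1 x y :=
  ⟨1, le_rfl, fun i ↦ if i = 0 then x else y, by simp, by simp, by simpa using h⟩

lemma ReachesIn.mono (h : ReachesIn step m x y) (hmn : m ≤ n) : ReachesIn step n x y :=
  let ⟨k, hk, hf⟩ := h
  ⟨k, hk.trans hmn, hf⟩

lemma ReachesIn.trans (hxy : ReachesIn step m x y) (hyz : ReachesIn step n y z) :
    ReachesIn step (m + n) x z := by
  obtain ⟨k, hk, f, rfl, rfl, hf⟩ := hxy
  obtain ⟨l, hl, g, hg₀, rfl, hg⟩ := hyz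
  refine ⟨k + l, by omega, fun i ↦ if i ≤ k then f i else g (i - k), by simp, ?_, fun i hi ↦ ?_⟩
  · rcases l.eq_zero_or_pos with rfl | hl
    · simp [hg₀]
    · simp [hl.ne']
  · rcases lt_trichotomy i k with hik | rfl | hik
    · simpa [hik.le, Nat.succ_le_of_lt hik] using hf i hik
    · simpa [hg₀] using hg 0 (by omega)
    · simpa [hik.not_ge, show ¬ i + 1 ≤ k by omega, show i + 1 - k = i - k + 1 by omega]
        using hg (i - k) (by omega)

end ReachesIn

section Graph

open SimpleGraph

variable {V : Type*} {S : Finset V} {C E : Finset (Sym2 V)} {p q a b : V}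

/-- The graph on `V` whose edges are the non-diagonal members of `E`. The points of `V` outside the
tree under consideration are isolated vertices. -/
abbrev edgeGraph (E : Finset (Sym2 V)) : SimpleGraph V := fromEdgeSet E

lemma edgeGraph_adj : (edgeGraph E).Adj a b ↔ s(a, b) ∈ E ∧ a ≠ b :=
  fromEdgeSet_adj _

lemma reachable_edgeGraph_of_mem (h : s(a, b) ∈ E) : (edgeGraph E).Reachable a b := by
  by_cases hab : a = b
  · exact hab ▸ Reachable.refl a
  · exact Adj.reachable (edgeGraph_adj.mpr ⟨h, hab⟩)

lemma notMem_of_not_reachable (h : ¬ (edgeGraph E).Reachable a b) : s(a, b) ∉ E :=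
  fun hab ↦ h (reachable_edgeGraph_of_mem hab)

lemma reflTransGen_mem_iff_reachable :
    Relation.ReflTransGen (fun a b ↦ s(a, b) ∈ E) p q ↔ (edgeGraph E).Reachable p q := by
  refine ⟨fun h ↦ ?_, fun h ↦ ?_⟩
  · induction h with
    | refl => exact Reachable.refl p
    | tail _ hbc ih => exact ih.trans (reachable_edgeGraph_of_mem hbc)
  · exact Relation.ReflTransGen.mono (fun a b hab ↦ (edgeGraph_adj.mp hab).1) _ _
      ((reachable_iff_reflTransGen p q).mp h)

lemma reachable_of_forall_adj_reachable {G H : SimpleGraph V}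
    (hGH : ∀ a b, G.Adj a b → H.Reachable a b) (h : G.Reachable p q) : H.Reachable p q := by
  obtain ⟨w⟩ := h
  induction w with
  | nil => exact Reachable.refl _
  | cons hadj _ ih => exact (hGH _ _ hadj).trans ih

lemma reachable_of_reachable_insert [DecidableEq V] {G : SimpleGraph V} (hCG : edgeGraph C ≤ G)
    (hpq : G.Reachable p q) (hab : (edgeGraph (insert s(p, q) C)).Reachable a b) :
    G.Reachable a b := by
  refine reachable_of_forall_adj_reachable (fun c d hcd ↦ ?_) hab
  obtain ⟨hmem, hne⟩ := edgeGraph_adj.mp hcd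
  rcases Finset.mem_insert.mp hmem with heq | hC
  · rcases Sym2.eq_iff.mp heq with ⟨rfl, rfl⟩ | ⟨rfl, rfl⟩
    exacts [hpq, hpq.symm]
  · exact (Adj.reachable (edgeGraph_adj.mpr ⟨hC, hne⟩)).mono hCG

lemma reachable_or_reachable_of_reachable_insert [DecidableEq V]
    (h : (edgeGraph (insert s(p, q) C)).Reachable p a) :
    (edgeGraph C).Reachable p a ∨ (edgeGraph C).Reachable q a := by
  rw [← reflTransGen_mem_iff_reachable] at h
  induction h with
  | refl => exact .inl (Reachable.refl p)
  | tail _ hbc ih =>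
    rcases Finset.mem_insert.mp hbc with heq | hC
    · rcases Sym2.eq_iff.mp heq with ⟨-, rfl⟩ | ⟨-, rfl⟩
      exacts [.inr (Reachable.refl _), .inl (Reachable.refl _)]
    · exact ih.imp (·.trans (reachable_edgeGraph_of_mem hC))
        (·.trans (reachable_edgeGraph_of_mem hC))

lemma support_subset_of_forall_mem (hE : ∀ e ∈ E, ∀ v ∈ e, v ∈ S)
    (w : (edgeGraph E).Walk p q) (hp : p ∈ S) : ∀ v ∈ w.support, v ∈ S := by
  induction w with
  | nil => simpa using hp
  | cons hadj w ih =>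
    have hmem := hE _ (edgeGraph_adj.mp hadj).1
    simpa [hp] using ih (hmem _ (Sym2.mem_mk_right _ _))

lemma card_le_card_edges_add_one (hE : ∀ e ∈ E, ∀ v ∈ e, v ∈ S)
    (hconn : ∀ a ∈ S, ∀ b ∈ S, (edgeGraph E).Reachable a b) :
    S.card ≤ E.card + 1 := by
  rcases S.eq_empty_or_nonempty with rfl | ⟨v, hv⟩
  · simp
  let G := (edgeGraph E).induce (S : Set V)
  have : Nonempty (S : Set V) := ⟨v, hv⟩
  have hG : G.Connected := Connected.mk fun a b ↦ by
    obtain ⟨w⟩ := hconn a a.2 b b.2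
    exact ⟨w.induce _ (support_subset_of_forall_mem hE w a.2)⟩
  have hedge : Nat.card G.edgeSet ≤ Nat.card (E : Set (Sym2 V)) := by
    refine Nat.card_le_card_of_injective (fun e ↦ ⟨Sym2.map Subtype.val e.1, ?_⟩) ?_
    · obtain ⟨e, he⟩ := e
      induction e with
      | _ a b => exact (edgeGraph_adj.mp he).1
    · intro e f hef
      exact Subtype.ext (Sym2.map.injective Subtype.val_injective (congrArg Subtype.val hef))
  simpa using hG.card_vert_le_card_edgeSet_add_one.trans (Nat.add_le_add_right hedge 1)

lemma length_add_length_add_two_le_card {p₁ q₁ : V} (hE : ∀ e ∈ E, ∀ v ∈ e, v ∈ S) (hp : p ∈ S)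
    (hq : q ∈ S) (hpq : ¬ (edgeGraph E).Reachable p q)
    {wp : (edgeGraph E).Walk p p₁} {wq : (edgeGraph E).Walk q q₁}
    (hwp : wp.IsPath) (hwq : wq.IsPath) :
    wp.length + wq.length + 2 ≤ S.card := by
  have hdisj : Disjoint wp.support.toFinset wq.support.toFinset := by
    refine Finset.disjoint_left.mpr fun v hvp hvq ↦ hpq ?_
    exact (wp.takeUntil v (by simpa using hvp)).reachable.trans
      (wq.takeUntil v (by simpa using hvq)).reachable.symm
  have hsub : wp.support.toFinset ∪ wq.support.toFinset ⊆ S := by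
    refine Finset.union_subset (fun v hv ↦ ?_) fun v hv ↦ ?_
    · exact support_subset_of_forall_mem hE wp hp v (by simpa using hv)
    · exact support_subset_of_forall_mem hE wq hq v (by simpa using hv)
  have hcard := Finset.card_le_card hsub
  rw [Finset.card_union_of_disjoint hdisj, List.toFinset_card_of_nodup hwp.support_nodup,
    List.toFinset_card_of_nodup hwq.support_nodup, Walk.length_support, Walk.length_support]
    at hcard
  omega

end Graph

section Orientation

variable {u v x y z : Pt} {K : Set Pt}

/-- Twice the signed area of the triangle `u v z`, as an affine function of `z`: it is positive,
zero or negative according to whether `z` lies to the left of, on or to the right of the directed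
line from `u` to `v`. -/
def orient (u v : Pt) : Pt →ᵃ[ℝ] ℝ :=
  ((v.1 - u.1) • LinearMap.snd ℝ ℝ ℝ - (v.2 - u.2) • LinearMap.fst ℝ ℝ ℝ).toAffineMap.comp
    (AffineMap.id ℝ Pt -ᵥ AffineMap.const ℝ Pt u)

lemma orient_apply (u v z : Pt) :
    orient u v z = (v.1 - u.1) * (z.2 - u.2) - (v.2 - u.2) * (z.1 - u.1) := by
  simp [orient]

@[simp] lemma orient_left (u v : Pt) : orient u v u = 0 := by
  simp [orient_apply]

@[simp] lemma orient_right (u v : Pt) : orient u v v = 0 := by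
  simp only [orient_apply]
  ring

lemma orient_swap_left (u v z : Pt) : orient v u z = -orient u v z := by
  simp only [orient_apply]
  ring

lemma orient_swap_right (u v z : Pt) : orient u z v = -orient u v z := by
  simp only [orient_apply]
  ring

lemma orient_rotate (u v z : Pt) : orient v z u = orient u v z := by
  simp only [orient_apply]
  ring

lemma orient_eq_zero_of_mem_segment (hz : z ∈ segment ℝ u v) : orient u v z = 0 := by
  obtain ⟨a, b, -, -, hab, rfl⟩ := hz
  simp [Convex.combo_affine_apply hab]

lemma collinear_of_orient_eq_zero (h : orient u v z = 0) :
    Collinear ℝ ({u, v, z} : Set Pt) := by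
  rcases eq_or_ne u v with rfl | huv
  · simpa using collinear_pair ℝ u z
  set d : ℝ := (v.1 - u.1) ^ 2 + (v.2 - u.2) ^ 2
  have hd : d ≠ 0 := by
    intro hd
    simp only [d] at hd
    exact huv (Prod.ext (by nlinarith) (by nlinarith))
  -- The parameter of the orthogonal projection of `z` to the line `u v`.
  let t : ℝ := ((v.1 - u.1) * (z.1 - u.1) + (v.2 - u.2) * (z.2 - u.2)) / d
  have hz : AffineMap.lineMap u v t = z := by
    rw [orient_apply] at h
    ext <;> simp only [AffineMap.lineMap_apply, vsub_eq_sub, vadd_eq_add, Prod.fst_add,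
      Prod.snd_add, Prod.smul_fst, Prod.smul_snd, Prod.fst_sub, Prod.snd_sub, smul_eq_mul, t] <;>
      field_simp <;> simp only [d]
    · linear_combination (v.2 - u.2) * h
    · linear_combination -(v.1 - u.1) * h
  have hcol : Collinear ℝ ({z, u, v} : Set Pt) :=
    collinear_insert_of_mem_affineSpan_pair (hz ▸ AffineMap.lineMap_mem_affineSpan_pair t u v)
  rwa [Set.insert_comm, Set.pair_comm] at hcol

lemma mem_of_orient_nonneg (hK : Convex ℝ K) (hu : u ∈ K) (hv : v ∈ K) (hx : x ∈ K)
    (hpos : 0 < orient u v x) (huv : 0 ≤ orient u v z) (hvx : 0 ≤ orient v x z)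
    (hxu : 0 ≤ orient x u z) : z ∈ K := by
  -- The barycentric coordinates of `z` are proportional to the areas it spans with the sides.
  let w : Fin 3 → ℝ := ![orient v x z, orient x u z, orient u v z]
  have hsum : ∑ i, w i = orient u v x := by
    simp only [w, Fin.sum_univ_three, orient_apply, Matrix.cons_val]
    ring
  have hz : Finset.univ.centerMass w ![u, v, x] = z := by
    rw [Finset.centerMass, hsum, inv_smul_eq_iff₀ hpos.ne']
    ext <;> simp [w, Fin.sum_univ_three, orient_apply] <;> ring
  rw [← hz]
  refine hK.centerMass_mem (fun i _ ↦ ?_) (hsum ▸ hpos) fun i _ ↦ ?_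
  · fin_cases i <;> simpa [w]
  · fin_cases i <;> simpa

lemma openSegment_subset_interior_of_orient_pos (hK : Convex ℝ K) (hu : u ∈ K) (hv : v ∈ K)
    (hx : x ∈ K) (hy : y ∈ K) (huvx : 0 < orient u v x) (hvuy : 0 < orient v u y) :
    openSegment ℝ u v ⊆ interior K := by
  have isOpen_left (a b : Pt) : IsOpen {z | 0 < orient a b z} :=
    isOpen_lt continuous_const (orient a b).continuous_of_finiteDimensional
  let U : Set Pt := ({z | 0 < orient v x z} ∩ {z | 0 < orient x u z}) ∩
    ({z | 0 < orient u y z} ∩ {z | 0 < orient y v z})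
  have hU : IsOpen U :=
    ((isOpen_left v x).inter (isOpen_left x u)).inter ((isOpen_left u y).inter (isOpen_left y v))
  have hUK : U ⊆ K := by
    rintro z ⟨⟨hvx, hxu⟩, huy, hyv⟩
    rcases le_total 0 (orient u v z) with huv | huv
    · exact mem_of_orient_nonneg hK hu hv hx huvx huv hvx.le hxu.le
    · refine mem_of_orient_nonneg hK hv hu hy hvuy ?_ huy.le hyv.le
      rw [orient_swap_left]
      exact neg_nonneg.mpr huv
  refine Set.Subset.trans ?_ (interior_maximal hUK hU)
  rintro _ ⟨a, b, ha, hb, hab, rfl⟩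
  have hxu : orient x u v = orient u v x := (orient_rotate x u v).symm
  have hyv : orient y v u = orient v u y := (orient_rotate y v u).symm
  simp only [U, Set.mem_inter_iff, Set.mem_ofPred_eq, Convex.combo_affine_apply hab, smul_eq_mul,
    orient_left, orient_right, orient_rotate u v x, hxu, orient_rotate v u y, hyv, mul_zero,
    zero_add, add_zero]
  exact ⟨⟨by positivity, by positivity⟩, by positivity, by positivity⟩

end Orientation

lemma eq_zero_of_nonneg_of_mem_interior {F : Type*} [NormedAddCommGroup F] [NormedSpace ℝ F]
    {K : Set F} {f : F →ᵃ[ℝ] ℝ} (hf : ∀ x ∈ K, 0 ≤ f x) {x z : F} (hz : z ∈ interior K)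
    (hfz : f z = 0) (hx : x ∈ K) : f x = 0 := by
  -- Move from `x` through `z` slightly beyond `z`, where `f` has the sign opposite to `f x`.
  have hcont : Filter.Tendsto (AffineMap.lineMap x z : ℝ → F) (nhds 1) (nhds z) := by
    have := (AffineMap.lineMap_continuous (R := ℝ) (p := x) (q := z)).tendsto 1
    rwa [AffineMap.lineMap_apply_one] at this
  obtain ⟨t, ht, htK⟩ := ((frequently_gt_nhds (1 : ℝ)).and_eventually
    (hcont.eventually (mem_interior_iff_mem_nhds.mp hz))).exists
  have hft : 0 ≤ (1 - t) * f x := by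
    have := hf _ htK
    rw [AffineMap.apply_lineMap, hfz, AffineMap.lineMap_apply_module] at this
    simpa using this
  nlinarith [hf x hx]

lemma eq_right_or_eq_zero_of_mem_segment {F : Type*} [AddCommGroup F] [Module ℝ F]
    {f : F →ᵃ[ℝ] ℝ} {a b z : F} (hab : 0 ≤ f a * f b) (hz : z ∈ segment ℝ a b) (hfz : f z = 0) :
    z = b ∨ f a = 0 := by
  obtain ⟨s, t, hs, ht, hst, rfl⟩ := hz
  have hcombo : s * f a ^ 2 + t * (f a * f b) = 0 := by
    rw [Convex.combo_affine_apply hst, smul_eq_mul, smul_eq_mul] at hfz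
    linear_combination f a * hfz
  have hsa : s * f a ^ 2 = 0 := by
    linarith [mul_nonneg hs (sq_nonneg (f a)), mul_nonneg ht hab]
  refine (mul_eq_zero.mp hsa).imp (fun h ↦ ?_) eq_zero_of_pow_eq_zero
  obtain rfl : t = 1 := by linarith
  simp [h]

section HullEdges

variable {S : Finset Pt} {e f : Sym2 Pt} {p q r u v x y : Pt}

lemma ConvexPos.orient_ne_zero (hS : ConvexPos S) (hu : u ∈ S) (hv : v ∈ S) (hx : x ∈ S)
    (huv : u ≠ v) (hux : u ≠ x) (hvx : v ≠ x) : orient u v x ≠ 0 := by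
  intro h
  have not_wbtw {a b c : Pt} (ha : a ∈ S) (hb : b ∈ S) (hc : c ∈ S) (hab : a ≠ b) (hcb : c ≠ b) :
      ¬ Wbtw ℝ a b c := fun hw ↦
    hS b hb (segment_subset_convexHull (by simp [ha, hab]) (by simp [hc, hcb]) hw.mem_segment)
  rcases (collinear_of_orient_eq_zero h).wbtw_or_wbtw_or_wbtw with hw | hw | hw
  · exact not_wbtw hu hv hx huv hvx.symm hw
  · exact not_wbtw hv hx hu hvx hux hw
  · exact not_wbtw hx hu hv hux.symm huv.symm hw

lemma ConvexPos.eq_or_eq_of_orient_eq_zero (hS : ConvexPos S) (hu : u ∈ S) (hv : v ∈ S)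
    (hx : x ∈ S) (huv : u ≠ v) (h : orient u v x = 0) : x = u ∨ x = v := by
  by_contra! hne
  exact hS.orient_ne_zero hu hv hx huv hne.1.symm hne.2.symm h

lemma isHullEdge_mk_iff : IsHullEdge S s(u, v) ↔
    u ∈ S ∧ v ∈ S ∧ u ≠ v ∧ segment ℝ u v ⊆ frontier (convexHull ℝ (S : Set Pt)) := by
  refine ⟨?_, fun ⟨hu, hv, huv, hfr⟩ ↦ ⟨u, v, rfl, hu, hv, huv, hfr⟩⟩
  rintro ⟨a, b, heq, ha, hb, hab, hfr⟩
  rcases Sym2.eq_iff.mp heq with ⟨rfl, rfl⟩ | ⟨rfl, rfl⟩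
  · exact ⟨ha, hb, hab, hfr⟩
  · exact ⟨hb, ha, hab.symm, segment_symm ℝ v u ▸ hfr⟩

lemma IsHullEdge.mem (he : IsHullEdge S e) (hp : p ∈ e) : p ∈ S := by
  obtain ⟨u, v, rfl, hu, hv, -, -⟩ := he
  rcases Sym2.mem_iff.mp hp with rfl | rfl <;> assumption

lemma IsHullEdge.orient_mul_orient_nonneg (he : IsHullEdge S s(u, v)) (hx : x ∈ S) (hy : y ∈ S) :
    0 ≤ orient u v x * orient u v y := by
  obtain ⟨hu, hv, -, hfr⟩ := isHullEdge_mk_iff.mp he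
  have hsub := subset_convexHull ℝ (S : Set Pt)
  have not_opposite {a b : Pt} (ha : a ∈ S) (hb : b ∈ S) (hua : 0 < orient u v a)
      (hub : orient u v b < 0) : False := by
    have hint := openSegment_subset_interior_of_orient_pos (convex_convexHull ℝ (S : Set Pt))
      (hsub hu) (hsub hv) (hsub ha) (hsub hb) hua (by rwa [orient_swap_left, neg_pos])
    have hmid : midpoint ℝ u v ∈ openSegment ℝ u v := midpoint_mem_openSegment u v
    exact (hfr (openSegment_subset_segment ℝ u v hmid)).2 (hint hmid)
  by_contra! hneg
  rcases mul_neg_iff.mp hneg with ⟨hpos, hneg⟩ | ⟨hneg, hpos⟩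
  · exact not_opposite hx hy hpos hneg
  · exact not_opposite hy hx hpos hneg

lemma ConvexPos.not_three_isHullEdge (hS : ConvexPos S) (hu : IsHullEdge S s(p, u))
    (hv : IsHullEdge S s(p, v)) (hx : IsHullEdge S s(p, x)) (huv : u ≠ v) (hux : u ≠ x)
    (hvx : v ≠ x) : False := by
  obtain ⟨hpS, huS, hpu, -⟩ := isHullEdge_mk_iff.mp hu
  obtain ⟨-, hvS, hpv, -⟩ := isHullEdge_mk_iff.mp hv
  obtain ⟨-, hxS, hpx, -⟩ := isHullEdge_mk_iff.mp hx
  -- The three sign conditions multiply to minus a nonzero square.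
  have hnonneg := mul_nonneg (mul_nonneg (hu.orient_mul_orient_nonneg hvS hxS)
    (hv.orient_mul_orient_nonneg huS hxS)) (hx.orient_mul_orient_nonneg huS hvS)
  rw [orient_swap_right p u v, orient_swap_right p u x, orient_swap_right p v x] at hnonneg
  have hne : orient p u v * orient p u x * orient p v x ≠ 0 :=
    mul_ne_zero (mul_ne_zero (hS.orient_ne_zero hpS huS hvS hpu hpv huv)
      (hS.orient_ne_zero hpS huS hxS hpu hpx hux)) (hS.orient_ne_zero hpS hvS hxS hpv hpx hvx)
  linarith [pow_two_pos_of_ne_zero hne]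

lemma ConvexPos.card_le_of_forall_isHullEdge (hS : ConvexPos S) {H : Finset (Sym2 Pt)}
    (hH : ∀ e ∈ H, IsHullEdge S e) : H.card ≤ S.card := by
  have two_le_card_ends (e) (he : e ∈ H) : 2 ≤ (S.bipartiteAbove (fun e p ↦ p ∈ e) e).card := by
    obtain ⟨u, v, rfl, hu, hv, huv, -⟩ := hH e he
    exact Finset.one_lt_card.mpr ⟨u, by simp [hu], v, by simp [hv], huv⟩
  have degree_le_two (p) (_ : p ∈ S) : (H.bipartiteBelow (fun e p ↦ p ∈ e) p).card ≤ 2 := by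
    by_contra! hdeg
    obtain ⟨a, ha, b, hb, c, hc, hab, hac, hbc⟩ := Finset.two_lt_card.mp hdeg
    simp only [Finset.mem_bipartiteBelow] at ha hb hc
    obtain ⟨⟨ha, u, rfl⟩, ⟨hb, v, rfl⟩, hc, x, rfl⟩ := ha, hb, hc
    exact hS.not_three_isHullEdge (hH _ ha) (hH _ hb) (hH _ hc)
      (ne_of_apply_ne _ hab) (ne_of_apply_ne _ hac) (ne_of_apply_ne _ hbc)
  have := Finset.card_mul_le_card_mul _ two_le_card_ends degree_le_two
  omega

lemma ConvexPos.noCrossPair_of_isHullEdge (hS : ConvexPos S) (he : IsHullEdge S e)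
    (hfS : ∀ p ∈ f, p ∈ S) (hef : e ≠ f) (hf : ¬ f.IsDiag) : NoCrossPair e f := by
  induction e with | _ u v =>
  induction f with | _ a b =>
  obtain ⟨hu, hv, huv, -⟩ := isHullEdge_mk_iff.mp he
  have ha : a ∈ S := hfS a (Sym2.mem_mk_left a b)
  have hb : b ∈ S := hfS b (Sym2.mem_mk_right a b)
  have hab : a ≠ b := by simpa using hf
  rintro z ⟨hzuv, hzab⟩
  have hz : orient u v z = 0 := orient_eq_zero_of_mem_segment hzuv
  have hside := he.orient_mul_orient_nonneg ha hb
  have hzb := eq_right_or_eq_zero_of_mem_segment hside hzab hz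
  have hza := eq_right_or_eq_zero_of_mem_segment (mul_comm (orient u v a) _ ▸ hside)
    (segment_symm ℝ a b ▸ hzab) hz
  have ends {c : Pt} (hc : c ∈ S) := hS.eq_or_eq_of_orient_eq_zero hu hv hc huv
  rcases hzb, hza with ⟨rfl | hoa, rfl | hob⟩
  · exact absurd rfl hab
  · exact ⟨Sym2.mem_iff.mpr (ends hb hob), Sym2.mem_mk_right a z⟩
  · exact ⟨Sym2.mem_iff.mpr (ends ha hoa), Sym2.mem_mk_left z b⟩
  · have := ends ha hoa
    have := ends hb hob
    grind

lemma IsHullEdge.disjoint_triInt (he : IsHullEdge S e) (hp : p ∈ S) (hq : q ∈ S) (hr : r ∈ S) :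
    Disjoint (segOf e) (triInt p q r) := by
  obtain ⟨u, v, rfl, -, -, -, hfr⟩ := he
  refine Set.disjoint_left.mpr fun z hz hint ↦ (hfr hz).2 ?_
  exact interior_mono (convexHull_mono (by simp [Set.insert_subset_iff, hp, hq, hr])) hint

lemma disjoint_segment_triInt (h : orient p q r ≠ 0) :
    Disjoint (segment ℝ p q) (triInt p q r) := by
  refine Set.disjoint_left.mpr fun z hz hint ↦ h ?_
  let g : Pt →ᵃ[ℝ] ℝ := orient p q r • orient p q
  have hg : convexHull ℝ {p, q, r} ⊆ g ⁻¹' Set.Ici 0 := by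
    refine convexHull_min ?_ ((convex_Ici 0).affine_preimage g)
    simp [Set.insert_subset_iff, g, mul_self_nonneg]
  have hgr := eq_zero_of_nonneg_of_mem_interior hg hint
    (by simp [g, orient_eq_zero_of_mem_segment hz])
    (subset_convexHull ℝ _ (by simp : r ∈ {p, q, r}))
  simpa [g] using hgr

end HullEdges

section Slides

variable {S : Finset Pt} {C E : Finset (Sym2 Pt)} {e f : Sym2 Pt} {p q r p₁ q₁ : Pt}

lemma IsPST.reachable (hE : IsPST S E) (hp : p ∈ S) (hq : q ∈ S) : (edgeGraph E).Reachable p q :=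
  reflTransGen_mem_iff_reachable.mp (hE.2.2.2 p hp q hq)

lemma IsPST.left_mem_of_insert (hE : IsPST S (insert s(p, q) C)) : p ∈ S :=
  (hE.1 _ (Finset.mem_insert_self _ _)).2 p (Sym2.mem_mk_left p q)

lemma IsPST.right_mem_of_insert (hE : IsPST S (insert s(p, q) C)) : q ∈ S :=
  (hE.1 _ (Finset.mem_insert_self _ _)).2 q (Sym2.mem_mk_right p q)

lemma IsPST.mem_of_mem_insert (hE : IsPST S (insert e C)) : ∀ f ∈ C, ∀ v ∈ f, v ∈ S :=
  fun f hf ↦ (hE.1 f (Finset.mem_insert_of_mem hf)).2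

lemma IsPST.not_reachable (hE : IsPST S (insert s(p, q) C)) (hpq : s(p, q) ∉ C) :
    ¬ (edgeGraph C).Reachable p q := by
  intro hreach
  have hcard := card_le_card_edges_add_one hE.mem_of_mem_insert fun a ha b hb ↦
    reachable_of_reachable_insert le_rfl hreach (hE.reachable ha hb)
  have := hE.2.2.1
  rw [Finset.card_insert_of_notMem hpq] at this
  omega

lemma IsPST.reachable_ends (hE : IsPST S (insert s(p, q) C)) (hF : IsPST S (insert s(p₁, q₁) C))
    (hends : ¬ (edgeGraph C).Reachable p₁ q₁) :
    (edgeGraph C).Reachable p p₁ ∧ (edgeGraph C).Reachable q q₁ ∨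
      (edgeGraph C).Reachable p q₁ ∧ (edgeGraph C).Reachable q p₁ := by
  have hp₁ := reachable_or_reachable_of_reachable_insert
    (hE.reachable hE.left_mem_of_insert hF.left_mem_of_insert)
  have hq₁ := reachable_or_reachable_of_reachable_insert
    (hE.reachable hE.left_mem_of_insert hF.right_mem_of_insert)
  rcases hp₁, hq₁ with ⟨hpp₁ | hqp₁, hpq₁ | hqq₁⟩
  · exact absurd (hpp₁.symm.trans hpq₁) hends
  · exact .inl ⟨hpp₁, hqq₁⟩
  · exact .inr ⟨hpq₁, hqp₁⟩
  · exact absurd (hqp₁.symm.trans hqq₁) hends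

lemma ConvexPos.noCross_insert (hS : ConvexPos S) (hC : ∀ e ∈ C, IsHullEdge S e)
    (hfS : ∀ p ∈ f, p ∈ S) (hf : ¬ f.IsDiag) : NoCross (insert f C) := by
  have hdiag {e} (he : IsHullEdge S e) : ¬ e.IsDiag := by
    obtain ⟨u, v, rfl, -, -, huv, -⟩ := he
    simpa using huv
  intro a ha b hb hab
  rcases Finset.mem_insert.mp ha with rfl | haC
  · have hbC := (Finset.mem_insert.mp hb).resolve_left hab.symm
    have := hS.noCrossPair_of_isHullEdge (hC b hbC) hfS hab.symm hf
    rwa [NoCrossPair, Set.inter_comm, Set.inter_comm (epts a)]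
  · rcases Finset.mem_insert.mp hb with rfl | hbC
    · exact hS.noCrossPair_of_isHullEdge (hC a haC) hfS hab hf
    · exact hS.noCrossPair_of_isHullEdge (hC a haC) (fun _ ↦ (hC b hbC).mem) hab
        (hdiag (hC b hbC))

lemma IsPST.insert_of_reachable (hS : ConvexPos S) (hC : ∀ e ∈ C, IsHullEdge S e)
    (hE : IsPST S (insert s(p, q) C)) (hpq : ¬ (edgeGraph C).Reachable p q)
    (hqr : (edgeGraph C).Reachable q r) : IsPST S (insert s(p, r) C) := by
  have hpr : ¬ (edgeGraph C).Reachable p r := fun h ↦ hpq (h.trans hqr.symm)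
  have hr : r ∈ S := by
    obtain ⟨w⟩ := hqr
    exact support_subset_of_forall_mem hE.mem_of_mem_insert w hE.right_mem_of_insert r
      w.end_mem_support
  have hends : ∀ v ∈ s(p, r), v ∈ S := by simp [hE.left_mem_of_insert, hr]
  have hdiag : ¬ s(p, r).IsDiag := by
    rw [Sym2.mk_isDiag_iff]
    rintro rfl
    exact hpr (.refl p)
  refine ⟨?_, hS.noCross_insert hC hends hdiag, ?_, fun a ha b hb ↦ ?_⟩
  · rw [Finset.forall_mem_insert]
    exact ⟨⟨hdiag, hends⟩, fun e he ↦ hE.1 e (Finset.mem_insert_of_mem he)⟩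
  · have := hE.2.2.1
    rwa [Finset.card_insert_of_notMem (notMem_of_not_reachable hpq),
      ← Finset.card_insert_of_notMem (notMem_of_not_reachable hpr)] at this
  · have hle : edgeGraph C ≤ edgeGraph (insert s(p, r) C) :=
      SimpleGraph.fromEdgeSet_mono (by simp)
    have hpq_new := (reachable_edgeGraph_of_mem (Finset.mem_insert_self s(p, r) C)).trans
      (hqr.symm.mono hle)
    exact reflTransGen_mem_iff_reachable.mpr
      (reachable_of_reachable_insert hle hpq_new (hE.reachable ha hb))

lemma IsPST.edgeSlide_insert (hS : ConvexPos S) (hC : ∀ e ∈ C, IsHullEdge S e)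
    (hE : IsPST S (insert s(p, q) C)) (hpq : ¬ (edgeGraph C).Reachable p q)
    (hqr : (edgeGraph C).Adj q r) :
    EdgeSlide S (insert s(p, q) C) (insert s(p, r) C) := by
  have hF : IsPST S (insert s(p, r) C) := hE.insert_of_reachable hS hC hpq hqr.reachable
  have hpr : ¬ (edgeGraph C).Reachable p r := fun h ↦ hpq (h.trans hqr.symm.reachable)
  obtain ⟨hqrC, hqrne⟩ := edgeGraph_adj.mp hqr
  have hp : p ∈ S := hE.left_mem_of_insert
  have hq : q ∈ S := hE.right_mem_of_insert
  have hr : r ∈ S := hF.right_mem_of_insert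
  have hpqne : p ≠ q := by rintro rfl; exact hpq (.refl p)
  have hprne : p ≠ r := by rintro rfl; exact hpr (.refl p)
  have hne : s(p, q) ≠ s(p, r) := mt Sym2.congr_right.mp hqrne
  have hdisj : ∀ g ∈ insert s(p, q) C ∪ insert s(p, r) C, Disjoint (segOf g) (triInt p q r) := by
    intro g hg
    obtain rfl | rfl | hgC : g = s(p, q) ∨ g = s(p, r) ∨ g ∈ C := by grind
    · exact disjoint_segment_triInt (hS.orient_ne_zero hp hq hr hpqne hprne hqrne)
    · rw [triInt, Set.pair_comm q r]
      exact disjoint_segment_triInt (hS.orient_ne_zero hp hr hq hprne hpqne hqrne.symm)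
    · exact (hC g hgC).disjoint_triInt hp hq hr
  exact ⟨hE, hF, p, q, r, Finset.insert_sdiff_insert' hne (notMem_of_not_reachable hpq),
    Finset.insert_sdiff_insert' hne.symm (notMem_of_not_reachable hpr),
    Finset.mem_insert_of_mem hqrC, Finset.mem_insert_of_mem hqrC, hdisj⟩

lemma IsPST.reachesIn_of_walk (hS : ConvexPos S) (hC : ∀ e ∈ C, IsHullEdge S e)
    (hE : IsPST S (insert s(p, q) C)) (hpq : ¬ (edgeGraph C).Reachable p q)
    (w : (edgeGraph C).Walk q r) :
    ReachesIn (EdgeSlide S) w.length (insert s(p, q) C) (insert s(p, r) C) := by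
  induction w with
  | nil => exact .refl _ _ _
  | cons hadj w ih =>
    have hslide := hE.edgeSlide_insert hS hC hpq hadj
    rw [SimpleGraph.Walk.length_cons, add_comm]
    exact (ReachesIn.single hslide).trans
      (ih hslide.2.1 fun h ↦ hpq (h.trans hadj.symm.reachable))

lemma IsPST.reachesIn_of_reachable (hS : ConvexPos S) (hC : ∀ e ∈ C, IsHullEdge S e)
    (hE : IsPST S (insert s(p, q) C)) (hpq : ¬ (edgeGraph C).Reachable p q)
    (hpp₁ : (edgeGraph C).Reachable p p₁) (hqq₁ : (edgeGraph C).Reachable q q₁) :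
    ReachesIn (EdgeSlide S) (S.card - 2) (insert s(p, q) C) (insert s(p₁, q₁) C) := by
  obtain ⟨wp, hwp⟩ := hpp₁.exists_isPath
  obtain ⟨wq, hwq⟩ := hqq₁.exists_isPath
  have hE₁ : IsPST S (insert s(q₁, p) C) :=
    Sym2.eq_swap (a := p) ▸ hE.insert_of_reachable hS hC hpq hqq₁
  have hmoveq := hE.reachesIn_of_walk hS hC hpq wq
  have hmovep := hE₁.reachesIn_of_walk hS hC (fun h ↦ hpq (h.symm.trans hqq₁.symm)) wp
  rw [Sym2.eq_swap (a := q₁), Sym2.eq_swap (a := q₁)] at hmovep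
  have hlength := length_add_length_add_two_le_card hE.mem_of_mem_insert
    hE.left_mem_of_insert hE.right_mem_of_insert hpq hwp hwq
  exact (hmoveq.trans hmovep).mono (by omega)

lemma IsPST.reachesIn_insert (hS : ConvexPos S) (hC : ∀ e ∈ C, IsHullEdge S e)
    (hE : IsPST S (insert e C)) (he : e ∉ C) (hF : IsPST S (insert f C)) (hf : f ∉ C) :
    ReachesIn (EdgeSlide S) (S.card - 2) (insert e C) (insert f C) := by
  induction e with | _ p q =>
  induction f with | _ p₁ q₁ =>
  have hpq := hE.not_reachable he
  rcases hE.reachable_ends hF (hF.not_reachable hf) with ⟨hp, hq⟩ | ⟨hp, hq⟩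
  · exact hE.reachesIn_of_reachable hS hC hpq hp hq
  · rw [Sym2.eq_swap (a := p₁)]
    exact hE.reachesIn_of_reachable hS hC hpq hp hq

end Slides

/-- two spanning paths consisting of convex hull edges can be transformed into
one another by at most `n - 2` edge slides. -/
theorem stmt_7 :
    ∀ S : Finset Pt, 3 ≤ S.card → ConvexPos S →
      ∀ P₁ P₂ : Finset (Sym2 Pt),
        IsPST S P₁ → (∀ e ∈ P₁, IsHullEdge S e) →
        IsPST S P₂ → (∀ e ∈ P₂, IsHullEdge S e) →
        ReachesIn (EdgeSlide S) (S.card - 2) P₁ P₂ := by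
  intro S _ hS P₁ P₂ hP₁ hH₁ hP₂ hH₂
  rcases eq_or_ne P₁ P₂ with rfl | hne
  · exact .refl _ _ _
  have hcard : P₁.card = P₂.card := Nat.succ_injective (hP₁.2.2.1.trans hP₂.2.2.1.symm)
  have hunion : (P₁ ∪ P₂).card ≤ P₁.card + 1 := by
    rw [hP₁.2.2.1]
    exact hS.card_le_of_forall_isHullEdge fun e he ↦
      (Finset.mem_union.mp he).elim (hH₁ e) (hH₂ e)
  obtain ⟨C, e, f, he, hf, rfl, rfl⟩ := exists_eq_insert_of_card_union_le hne hcard hunion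
  exact hP₁.reachesIn_insert hS (fun g hg ↦ hH₁ g (Finset.mem_insert_of_mem hg)) he hP₂ hf
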